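/- Assume the integral VHI data hypotheses. Define Ψ : V → ℝ by Ψ(v) = ∫_Δ ψ(γ_ψ v(x)) dμ(x). Then Ψ is well defined, locally Lipschitz continuous on V, and satisfies Ψ⁰(v₁; v₂ − v₁) + Ψ⁰(v₂; v₁ − v₂) ≤ α_ψ c_Δ² ‖v₁ − v₂‖_V² for all v₁, v₂ ∈ V, where Ψ⁰ denotes the Clarke directional derivative of Ψ. -/

import Mathlib

open Filter Topology MeasureTheory RealInnerProductSpace

/-- The Clarke (generalized) directional derivative of `f` at `u` in direction `v`. -/
noncomputable def clarkeDeriv {X : Type*} [NormedAddCommGroup X] [NormedSpace ℝ X]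
    (f : X → ℝ) (u v : X) : ℝ :=
  Filter.limsup (fun p : X × ℝ => (f (p.1 + p.2 • v) - f p.1) / p.2)
    ((𝓝 u) ×ˢ 𝓝[>] (0:ℝ))

/-!
By Hahn–Banach, `ψ⁰(z; ·)` is the support function of `∂ψ(z)`, so linear growth of the subgradients
bounds `ψ⁰`, and the mean value inequality along segments gives
`|ψ a - ψ b| ≤ c (1 + |a| + |b|) |a - b|`. Integrated with Cauchy–Schwarz, this makes
`J f = ∫ ψ ∘ f` finite and locally Lipschitz on `L²`. The same bound dominates the difference
quotients of `ψ`, and Fatou's lemma along sequences realizing the upper limit yields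
`J⁰(f; g) ≤ ∫ ψ⁰(f; g)`, where upper semicontinuity of `ψ⁰` makes the right-hand integrand
measurable. The claim follows by integrating the pointwise inequality for `ψ⁰` and composing `J`
with `γ`, since `(J ∘ γ)⁰(v; w) ≤ J⁰(γ v; γ w)`.
-/

section Clarke

variable {X : Type*} [NormedAddCommGroup X] {f : X → ℝ} {u : X}

/-- `f` is Lipschitz near `u`, the standing assumption of Clarke's calculus at the point `u`.
`LocallyLipschitz f` unfolds to `∀ u, LipschitzNear f u`. -/
def LipschitzNear (f : X → ℝ) (u : X) : Prop :=
  ∃ K : NNReal, ∃ s ∈ 𝓝 u, LipschitzOnWith K f s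

theorem lipschitzNear_iff_eventually :
    LipschitzNear f u ↔
      ∃ K : ℝ, ∀ᶠ p : X × X in 𝓝 (u, u), |f p.1 - f p.2| ≤ K * ‖p.1 - p.2‖ := by
  constructor
  · rintro ⟨K, s, hs, hK⟩
    refine ⟨K, ?_⟩
    filter_upwards [prod_mem_nhds hs hs] with p hp
    simpa only [Real.dist_eq, ← dist_eq_norm] using hK.dist_le_mul _ hp.1 _ hp.2
  · rintro ⟨K, hK⟩
    rw [nhds_prod_eq] at hK
    obtain ⟨s, hs, hsK⟩ :=
      (eventually_prod_self_iff (r := fun a b => |f a - f b| ≤ K * ‖a - b‖)).1 hK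
    refine ⟨K.toNNReal, s, hs, LipschitzOnWith.of_dist_le_mul fun a ha b hb => ?_⟩
    rw [Real.dist_eq, dist_eq_norm]
    exact (hsK a ha b hb).trans (by gcongr; exact Real.le_coe_toNNReal K)

theorem lipschitzNear_of_eventually_abs_sub_le {k : X × X → ℝ} (hk : ContinuousAt k (u, u))
    (hf : ∀ᶠ p : X × X in 𝓝 (u, u), |f p.1 - f p.2| ≤ k p * ‖p.1 - p.2‖) :
    LipschitzNear f u := by
  refine lipschitzNear_iff_eventually.2 ⟨k (u, u) + 1, ?_⟩
  filter_upwards [hf, hk.eventually_lt continuousAt_const (lt_add_one _)] with p hp hkp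
  exact hp.trans (by gcongr)

/-- The Lipschitz constant of `f` on balls grows at most linearly with the radius, the form in
which a linear growth bound on the Clarke subgradients is integrated over `Δ`. -/
def LipschitzWithLinearGrowth (c : ℝ) (f : X → ℝ) : Prop :=
  ∀ a b, |f a - f b| ≤ c * (1 + ‖a‖ + ‖b‖) * ‖a - b‖

theorem continuous_linearGrowthRate (c : ℝ) :
    Continuous fun p : X × X => c * (1 + ‖p.1‖ + ‖p.2‖) := by
  fun_prop

theorem LipschitzWithLinearGrowth.lipschitzNear {c : ℝ} (hf : LipschitzWithLinearGrowth c f)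
    (u : X) : LipschitzNear f u :=
  lipschitzNear_of_eventually_abs_sub_le (continuous_linearGrowthRate c).continuousAt
    (Eventually.of_forall fun p => hf p.1 p.2)

theorem LipschitzWithLinearGrowth.continuous {c : ℝ} (hf : LipschitzWithLinearGrowth c f) :
    Continuous f :=
  LocallyLipschitz.continuous hf.lipschitzNear

variable [NormedSpace ℝ X]

theorem LipschitzNear.comp_continuousLinearMap {Y : Type*} [NormedAddCommGroup Y]
    [NormedSpace ℝ Y] {γ : Y →L[ℝ] X} {v : Y} (hf : LipschitzNear f (γ v)) :
    LipschitzNear (fun y => f (γ y)) v := by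
  obtain ⟨K, s, hs, hK⟩ := hf
  exact ⟨K * ‖γ‖₊, γ ⁻¹' s, γ.continuous.continuousAt hs,
    hK.comp γ.lipschitz.lipschitzOnWith (Set.mapsTo_preimage γ s)⟩

theorem tendsto_fst_add_snd_smul (u v : X) :
    Tendsto (fun p : X × ℝ => p.1 + p.2 • v) (𝓝 u ×ˢ 𝓝[>] 0) (𝓝 u) := by
  have h_snd : Tendsto (fun p : X × ℝ => p.2) (𝓝 u ×ˢ 𝓝[>] 0) (𝓝 0) :=
    tendsto_snd.mono_right nhdsWithin_le_nhds
  simpa only [zero_smul, add_zero] using tendsto_fst.add (h_snd.smul_const v)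

theorem eventually_abs_quotient_le {k : X × X → ℝ}
    (hf : ∀ᶠ p : X × X in 𝓝 (u, u), |f p.1 - f p.2| ≤ k p * ‖p.1 - p.2‖) (v : X) :
    ∀ᶠ p : X × ℝ in 𝓝 u ×ˢ 𝓝[>] 0,
      |(f (p.1 + p.2 • v) - f p.1) / p.2| ≤ k (p.1 + p.2 • v, p.1) * ‖v‖ := by
  have h_pair : Tendsto (fun p : X × ℝ => (p.1 + p.2 • v, p.1)) (𝓝 u ×ˢ 𝓝[>] 0) (𝓝 (u, u)) :=
    (tendsto_fst_add_snd_smul u v).prodMk_nhds tendsto_fst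
  filter_upwards [h_pair.eventually hf, tendsto_snd.eventually self_mem_nhdsWithin]
    with p hp (hpos : 0 < p.2)
  rw [add_sub_cancel_left, norm_smul, Real.norm_of_nonneg hpos.le] at hp
  rw [abs_div, abs_of_pos hpos, div_le_iff₀ hpos]
  linarith

namespace LipschitzNear

theorem exists_eventually_abs_quotient_le (hf : LipschitzNear f u) (v : X) :
    ∃ M : ℝ, ∀ᶠ p : X × ℝ in 𝓝 u ×ˢ 𝓝[>] 0, |(f (p.1 + p.2 • v) - f p.1) / p.2| ≤ M := by
  obtain ⟨K, hK⟩ := lipschitzNear_iff_eventually.1 hf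
  exact ⟨K * ‖v‖, eventually_abs_quotient_le hK v⟩

theorem isCoboundedUnder_le_quotient (hf : LipschitzNear f u) (v : X) :
    IsCoboundedUnder (· ≤ ·) (𝓝 u ×ˢ 𝓝[>] 0)
      (fun p : X × ℝ => (f (p.1 + p.2 • v) - f p.1) / p.2) := by
  obtain ⟨M, hM⟩ := hf.exists_eventually_abs_quotient_le v
  exact (isBoundedUnder_of_eventually_ge
    (hM.mono fun _ hp => (abs_le.1 hp).1)).isCoboundedUnder_le

theorem eventually_quotient_lt (hf : LipschitzNear f u) {v : X} {a : ℝ}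
    (ha : clarkeDeriv f u v < a) :
    ∀ᶠ p : X × ℝ in 𝓝 u ×ˢ 𝓝[>] 0, (f (p.1 + p.2 • v) - f p.1) / p.2 < a := by
  obtain ⟨M, hM⟩ := hf.exists_eventually_abs_quotient_le v
  exact eventually_lt_of_limsup_lt ha
    (isBoundedUnder_of_eventually_le (hM.mono fun _ hp => (abs_le.1 hp).2))

theorem clarkeDeriv_le_of_eventually (hf : LipschitzNear f u) {v : X} {a : ℝ}
    (ha : ∀ᶠ p : X × ℝ in 𝓝 u ×ˢ 𝓝[>] 0, (f (p.1 + p.2 • v) - f p.1) / p.2 ≤ a) :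
    clarkeDeriv f u v ≤ a :=
  limsup_le_of_le (hf.isCoboundedUnder_le_quotient v) ha

theorem frequently_lt_quotient (hf : LipschitzNear f u) {v : X} {a : ℝ}
    (ha : a < clarkeDeriv f u v) :
    ∃ᶠ p : X × ℝ in 𝓝 u ×ˢ 𝓝[>] 0, a < (f (p.1 + p.2 • v) - f p.1) / p.2 :=
  frequently_lt_of_lt_limsup (hf.isCoboundedUnder_le_quotient v) ha

theorem clarkeDeriv_add_le (hf : LipschitzNear f u) (v w : X) :
    clarkeDeriv f u (v + w) ≤ clarkeDeriv f u v + clarkeDeriv f u w := by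
  refine le_add_of_forall_lt fun a ha b hb => hf.clarkeDeriv_le_of_eventually ?_
  have h_shift : Tendsto (fun p : X × ℝ => (p.1 + p.2 • w, p.2)) (𝓝 u ×ˢ 𝓝[>] 0)
      (𝓝 u ×ˢ 𝓝[>] 0) := (tendsto_fst_add_snd_smul u w).prodMk tendsto_snd
  filter_upwards [h_shift.eventually (hf.eventually_quotient_lt ha), hf.eventually_quotient_lt hb]
    with p hp_v hp_w
  calc (f (p.1 + p.2 • (v + w)) - f p.1) / p.2
      = (f (p.1 + p.2 • w + p.2 • v) - f (p.1 + p.2 • w)) / p.2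
        + (f (p.1 + p.2 • w) - f p.1) / p.2 := by
        rw [smul_add, add_comm (p.2 • v), ← add_assoc]; ring
    _ ≤ a + b := (add_lt_add hp_v hp_w).le

theorem clarkeDeriv_smul_le (hf : LipschitzNear f u) {t : ℝ} (ht : 0 < t) (v : X) :
    clarkeDeriv f u (t • v) ≤ t * clarkeDeriv f u v := by
  rw [← div_le_iff₀' ht]
  refine le_of_forall_gt_imp_ge_of_dense fun a ha => ?_
  rw [div_le_iff₀' ht]
  refine hf.clarkeDeriv_le_of_eventually ?_
  have h_mul : Tendsto (fun l : ℝ => l * t) (𝓝[>] 0) (𝓝[>] 0) := by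
    refine tendsto_nhdsWithin_iff.2 ⟨?_, ?_⟩
    · exact ((continuous_mul_const t).tendsto' 0 0 (zero_mul t)).mono_left nhdsWithin_le_nhds
    · filter_upwards [self_mem_nhdsWithin] with l hl using mul_pos hl ht
  have h_scale : Tendsto (fun p : X × ℝ => (p.1, p.2 * t)) (𝓝 u ×ˢ 𝓝[>] 0)
      (𝓝 u ×ˢ 𝓝[>] 0) := tendsto_fst.prodMk (h_mul.comp tendsto_snd)
  filter_upwards [h_scale.eventually (hf.eventually_quotient_lt ha)] with p hp
  calc (f (p.1 + p.2 • t • v) - f p.1) / p.2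
      = t * ((f (p.1 + (p.2 * t) • v) - f p.1) / (p.2 * t)) := by
        rw [smul_smul]; field_simp
    _ ≤ t * a := by gcongr

theorem clarkeDeriv_smul (hf : LipschitzNear f u) {t : ℝ} (ht : 0 < t) (v : X) :
    clarkeDeriv f u (t • v) = t * clarkeDeriv f u v := by
  refine le_antisymm (hf.clarkeDeriv_smul_le ht v) ?_
  have h := hf.clarkeDeriv_smul_le (inv_pos.2 ht) (t • v)
  rwa [inv_smul_smul₀ ht.ne', le_inv_mul_iff₀ ht] at h

end LipschitzNear

theorem clarkeDeriv_zero : clarkeDeriv f u 0 = 0 := by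
  simp [clarkeDeriv]

namespace LipschitzNear

theorem neg_clarkeDeriv_neg_le (hf : LipschitzNear f u) (v : X) :
    -clarkeDeriv f u (-v) ≤ clarkeDeriv f u v := by
  have h := hf.clarkeDeriv_add_le v (-v)
  rw [add_neg_cancel, clarkeDeriv_zero] at h
  linarith

theorem mul_clarkeDeriv_le (hf : LipschitzNear f u) (t : ℝ) (v : X) :
    t * clarkeDeriv f u v ≤ clarkeDeriv f u (t • v) := by
  rcases lt_trichotomy t 0 with ht | rfl | ht
  · have h := hf.neg_clarkeDeriv_neg_le (t • v)
    rwa [← neg_smul, hf.clarkeDeriv_smul (neg_pos.2 ht), neg_mul, neg_neg] at h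
  · rw [zero_mul, zero_smul, clarkeDeriv_zero]
  · exact (hf.clarkeDeriv_smul ht v).ge

end LipschitzNear

theorem clarkeDeriv_le_mul_norm {k : X × X → ℝ} (hk : ContinuousAt k (u, u))
    (hf : ∀ᶠ p : X × X in 𝓝 (u, u), |f p.1 - f p.2| ≤ k p * ‖p.1 - p.2‖) (v : X) :
    clarkeDeriv f u v ≤ k (u, u) * ‖v‖ := by
  have h_lim : Tendsto (fun p : X × ℝ => k (p.1 + p.2 • v, p.1) * ‖v‖) (𝓝 u ×ˢ 𝓝[>] 0)
      (𝓝 (k (u, u) * ‖v‖)) :=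
    (hk.tendsto.comp ((tendsto_fst_add_snd_smul u v).prodMk_nhds tendsto_fst)).mul_const _
  refine le_of_forall_gt_imp_ge_of_dense fun a ha =>
    (lipschitzNear_of_eventually_abs_sub_le hk hf).clarkeDeriv_le_of_eventually ?_
  filter_upwards [eventually_abs_quotient_le hf v, h_lim.eventually_lt_const ha] with p hp hpa
  exact (le_abs_self _).trans (hp.trans hpa.le)

theorem abs_clarkeDeriv_le_mul_norm {k : X × X → ℝ} (hk : ContinuousAt k (u, u))
    (hf : ∀ᶠ p : X × X in 𝓝 (u, u), |f p.1 - f p.2| ≤ k p * ‖p.1 - p.2‖) (v : X) :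
    |clarkeDeriv f u v| ≤ k (u, u) * ‖v‖ := by
  refine abs_le.2 ⟨?_, clarkeDeriv_le_mul_norm hk hf v⟩
  have h_neg := clarkeDeriv_le_mul_norm hk hf (-v)
  rw [norm_neg] at h_neg
  linarith [(lipschitzNear_of_eventually_abs_sub_le hk hf).neg_clarkeDeriv_neg_le v]

theorem LipschitzNear.clarkeDeriv_comp_continuousLinearMap_le {Y : Type*} [NormedAddCommGroup Y]
    [NormedSpace ℝ Y] {γ : Y →L[ℝ] X} {v : Y} (hf : LipschitzNear f (γ v)) (w : Y) :
    clarkeDeriv (fun y => f (γ y)) v w ≤ clarkeDeriv f (γ v) (γ w) := by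
  refine le_of_forall_gt_imp_ge_of_dense fun a ha =>
    hf.comp_continuousLinearMap.clarkeDeriv_le_of_eventually ?_
  have h_map : Tendsto (fun p : Y × ℝ => (γ p.1, p.2)) (𝓝 v ×ˢ 𝓝[>] 0)
      (𝓝 (γ v) ×ˢ 𝓝[>] 0) := (γ.continuous.tendsto v).prodMap tendsto_id
  filter_upwards [h_map.eventually (hf.eventually_quotient_lt ha)] with p hp
  rw [map_add, map_smul]
  exact hp.le

theorem LipschitzNear.upperSemicontinuousAt_clarkeDeriv (hf : LipschitzNear f u) (v : X) :
    UpperSemicontinuousAt (fun p : X × X => clarkeDeriv f p.1 p.2) (u, v) := by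
  intro a ha
  change clarkeDeriv f u v < a at ha
  obtain ⟨b, hb, hba⟩ := exists_between ha
  obtain ⟨K, hK⟩ := lipschitzNear_iff_eventually.1 hf
  have h_near : ∀ᶠ z in 𝓝 u, ∀ᶠ p : X × X in 𝓝 (z, z), |f p.1 - f p.2| ≤ K * ‖p.1 - p.2‖ :=
    (tendsto_id.prodMk_nhds tendsto_id).eventually hK.eventually_nhds
  have h_base : ∀ᶠ z in 𝓝 u, clarkeDeriv f z v ≤ b := by
    obtain ⟨P, hP, Q, hQ, hPQ⟩ := eventually_prod_iff.1 (hf.eventually_quotient_lt hb)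
    filter_upwards [h_near, hP.eventually_nhds] with z hz hPz
    exact (lipschitzNear_iff_eventually.2 ⟨K, hz⟩).clarkeDeriv_le_of_eventually
      (eventually_prod_iff.2 ⟨P, hPz, Q, hQ, fun hy _ hl => (hPQ hy hl).le⟩)
  have h_small : ∀ᶠ w in 𝓝 v, b + K * ‖w - v‖ < a :=
    ContinuousAt.eventually_lt (f := fun w => b + K * ‖w - v‖) (by fun_prop)
      continuousAt_const (by simpa using hba)
  rw [nhds_prod_eq]
  filter_upwards [(h_near.and h_base).prod_mk h_small] with ⟨z, w⟩ ⟨⟨hz_near, hz⟩, hw⟩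
  calc clarkeDeriv f z w = clarkeDeriv f z (v + (w - v)) := by rw [add_sub_cancel]
    _ ≤ clarkeDeriv f z v + clarkeDeriv f z (w - v) :=
      (lipschitzNear_iff_eventually.2 ⟨K, hz_near⟩).clarkeDeriv_add_le _ _
    _ ≤ b + K * ‖w - v‖ :=
      add_le_add hz (clarkeDeriv_le_mul_norm continuousAt_const hz_near _)
    _ < a := hw

/-- The Clarke subdifferential of `f` at `u`, as a set of continuous linear functionals. -/
def clarkeSubdifferential (f : X → ℝ) (u : X) : Set (StrongDual ℝ X) :=
  {ξ | ∀ w, ξ w ≤ clarkeDeriv f u w}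

theorem LipschitzNear.exists_mem_clarkeSubdifferential_eq (hf : LipschitzNear f u) (v : X) :
    ∃ ξ ∈ clarkeSubdifferential f u, ξ v = clarkeDeriv f u v := by
  have h_well_defined : ∀ t : ℝ, t • v = 0 → t • clarkeDeriv f u v = 0 := by
    intro t ht
    rcases smul_eq_zero.1 ht with rfl | rfl
    · exact zero_smul _ _
    · rw [clarkeDeriv_zero, smul_zero]
  obtain ⟨g, hg_eq, hg_le⟩ := exists_extension_of_le_sublinear
    (LinearPMap.mkSpanSingleton' v (clarkeDeriv f u v) h_well_defined) (clarkeDeriv f u)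
    (fun t ht w => hf.clarkeDeriv_smul ht w) hf.clarkeDeriv_add_le (by
      rintro ⟨x, hx⟩
      obtain ⟨t, rfl⟩ := Submodule.mem_span_singleton.1 hx
      exact (LinearPMap.mkSpanSingleton'_apply _ _ _ t hx).trans_le (hf.mul_clarkeDeriv_le t v))
  obtain ⟨K, hK⟩ := lipschitzNear_iff_eventually.1 hf
  have hg_bound : ∀ w, ‖g w‖ ≤ K * ‖w‖ := by
    intro w
    have h_le := clarkeDeriv_le_mul_norm continuousAt_const hK
    refine abs_le'.2 ⟨(hg_le w).trans (h_le w), ?_⟩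
    rw [← map_neg, ← norm_neg w]
    exact (hg_le (-w)).trans (h_le (-w))
  refine ⟨g.mkContinuous K hg_bound, hg_le, ?_⟩
  exact (hg_eq ⟨v, Submodule.mem_span_singleton_self v⟩).trans
    (LinearPMap.mkSpanSingleton'_apply_self _ _ _ _)

theorem LipschitzNear.clarkeDeriv_le_of_subgradient_norm_le (hf : LipschitzNear f u) {C : ℝ}
    (hC : ∀ ξ ∈ clarkeSubdifferential f u, ‖ξ‖ ≤ C) (v : X) :
    clarkeDeriv f u v ≤ C * ‖v‖ := by
  obtain ⟨ξ, hξ, hξv⟩ := hf.exists_mem_clarkeSubdifferential_eq v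
  rw [← hξv]
  exact (le_abs_self _).trans (ξ.le_of_opNorm_le (hC ξ hξ) v)

theorem sub_le_of_clarkeDeriv_le_on_segment {a b : X} {C : ℝ}
    (hf : ∀ z ∈ segment ℝ a b, LipschitzNear f z)
    (hC : ∀ z ∈ segment ℝ a b, clarkeDeriv f z (b - a) ≤ C) : f b - f a ≤ C := by
  have h_cont : ∀ z ∈ segment ℝ a b, ContinuousAt f z := fun z hz => by
    obtain ⟨K, s, hs, hK⟩ := hf z hz
    exact hK.continuousOn.continuousAt hs
  have h_seg : ∀ t ∈ Set.Icc (0 : ℝ) 1, a + t • (b - a) ∈ segment ℝ a b := fun t ht =>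
    segment_eq_image' ℝ a b ▸ Set.mem_image_of_mem _ ht
  have h_slope : ∀ t ∈ Set.Ico (0 : ℝ) 1, ∀ r, C < r →
      ∃ᶠ s in 𝓝[>] t, slope (fun t : ℝ => f (a + t • (b - a))) t s < r := by
    intro t ht r hr
    have h_mem := h_seg t (Set.Ico_subset_Icc_self ht)
    have h_sub : Tendsto (fun s : ℝ => s - t) (𝓝[>] t) (𝓝[>] 0) := by
      refine tendsto_nhdsWithin_iff.2 ⟨?_, ?_⟩
      · exact ((continuous_sub_right t).tendsto' t 0 (sub_self t)).mono_left nhdsWithin_le_nhds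
      · filter_upwards [self_mem_nhdsWithin] with s (hs : t < s) using sub_pos.2 hs
    have h_quot := (tendsto_const_nhds.prodMk h_sub).eventually
      ((hf _ h_mem).eventually_quotient_lt ((hC _ h_mem).trans_lt hr))
    refine Eventually.frequently (h_quot.mono fun s hs => ?_)
    have h_point : a + s • (b - a) = a + t • (b - a) + (s - t) • (b - a) := by module
    rwa [slope_def_field, h_point]
  have h_bound := image_le_of_liminf_slope_right_le_deriv_boundary
    (f := fun t : ℝ => f (a + t • (b - a))) (a := 0) (b := 1)
    (B := fun t => f a + t * C) (B' := fun _ => C)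
    (fun t ht => ((h_cont _ (h_seg t ht)).comp
      (f := fun t : ℝ => a + t • (b - a)) (by fun_prop)).continuousWithinAt)
    (by simp) (by fun_prop)
    (fun t _ => by
      simpa using (((hasDerivAt_id t).mul_const C).const_add (f a)).hasDerivWithinAt)
    h_slope (Set.right_mem_Icc.2 zero_le_one)
  simp only [one_smul, add_sub_cancel, one_mul] at h_bound
  linarith

theorem lipschitzWithLinearGrowth_of_subgradient_norm_le {c : ℝ} (hf : LocallyLipschitz f)
    (hc : ∀ z, ∀ ξ ∈ clarkeSubdifferential f z, ‖ξ‖ ≤ c * (1 + ‖z‖)) :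
    LipschitzWithLinearGrowth c f := by
  have hf_near : ∀ z, LipschitzNear f z := hf
  have hc_nonneg : 0 ≤ c := by
    obtain ⟨ξ, hξ, -⟩ := (hf_near 0).exists_mem_clarkeSubdifferential_eq 0
    simpa using (norm_nonneg ξ).trans (hc 0 ξ hξ)
  have h_sub : ∀ a b, f b - f a ≤ c * (1 + ‖a‖ + ‖b‖) * ‖b - a‖ := by
    intro a b
    refine sub_le_of_clarkeDeriv_le_on_segment (fun z _ => hf_near z) fun z hz => ?_
    have hz_norm : ‖z‖ ≤ ‖a‖ + ‖b‖ :=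
      (convexOn_univ_norm.le_max_of_mem_segment (Set.mem_univ a) (Set.mem_univ b) hz).trans
        (max_le_add_of_nonneg (norm_nonneg a) (norm_nonneg b))
    refine ((hf_near z).clarkeDeriv_le_of_subgradient_norm_le (hc z) _).trans ?_
    rw [add_assoc 1]
    gcongr
  refine fun a b => abs_sub_le_iff.2 ⟨?_, ?_⟩
  · simpa only [add_right_comm] using h_sub b a
  · simpa only [norm_sub_rev] using h_sub a b

theorem LipschitzWithLinearGrowth.abs_clarkeDeriv_le {c : ℝ}
    (hf : LipschitzWithLinearGrowth c f) (u v : X) :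
    |clarkeDeriv f u v| ≤ c * (1 + ‖u‖ + ‖u‖) * ‖v‖ :=
  abs_clarkeDeriv_le_mul_norm (continuous_linearGrowthRate c).continuousAt
    (Eventually.of_forall fun p => hf p.1 p.2) v

theorem LipschitzWithLinearGrowth.eventually_lt_bound_sub_quotient {c : ℝ}
    (hf : LipschitzWithLinearGrowth c f) {u v : X} {d : ℝ}
    (hd : d < c * (1 + ‖u‖ + ‖u‖) * ‖v‖ - clarkeDeriv f u v) :
    ∀ᶠ p : X × ℝ in 𝓝 u ×ˢ 𝓝[>] 0,
      d < c * (1 + ‖p.1 + p.2 • v‖ + ‖p.1‖) * ‖v‖ - (f (p.1 + p.2 • v) - f p.1) / p.2 := by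
  obtain ⟨e, he, hed⟩ := exists_between (lt_sub_comm.1 hd)
  have h_bound : Tendsto (fun p : X × ℝ => c * (1 + ‖p.1 + p.2 • v‖ + ‖p.1‖) * ‖v‖)
      (𝓝 u ×ˢ 𝓝[>] 0) (𝓝 (c * (1 + ‖u‖ + ‖u‖) * ‖v‖)) :=
    (((continuous_linearGrowthRate c).tendsto (u, u)).comp
      ((tendsto_fst_add_snd_smul u v).prodMk_nhds tendsto_fst)).mul_const _
  filter_upwards [(hf.lipschitzNear u).eventually_quotient_lt he,
    h_bound.eventually_const_lt (lt_sub_comm.1 hed |> lt_sub_iff_add_lt.1)] with p hp hp'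
  linarith

end Clarke

section Fatou

variable {Δ : Type*} [MeasurableSpace Δ] {μ : Measure Δ}

/-- `h_liminf` expresses `g ≤ liminf r` without the junk value of an unbounded real `liminf`. -/
theorem integral_le_of_le_liminf {r : ℕ → Δ → ℝ} {g : Δ → ℝ} {c : ℕ → ℝ} {C : ℝ}
    (hr : ∀ n, Integrable (r n) μ) (hr_nonneg : ∀ n, 0 ≤ᵐ[μ] r n) (hg : Integrable g μ)
    (h_liminf : ∀ᵐ x ∂μ, ∀ d < g x, ∀ᶠ n in atTop, d < r n x)
    (hc : ∀ n, ∫ x, r n x ∂μ ≤ c n) (h_lim : Tendsto c atTop (𝓝 C)) : ∫ x, g x ∂μ ≤ C := by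
  have hC : 0 ≤ C :=
    ge_of_tendsto' h_lim fun n => (integral_nonneg_of_ae (hr_nonneg n)).trans (hc n)
  have h_pointwise : ∀ᵐ x ∂μ,
      ENNReal.ofReal (g x) ≤ liminf (fun n => ENNReal.ofReal (r n x)) atTop := by
    filter_upwards [h_liminf] with x hx
    refine le_of_forall_lt_imp_le_of_dense fun d hd => le_liminf_of_le ?_ ?_
    · isBoundedDefault
    have hd_top : d ≠ ⊤ := hd.ne_top
    filter_upwards [hx _ ((ENNReal.lt_ofReal_iff_toReal_lt hd_top).1 hd)] with n hn
    exact ((ENNReal.lt_ofReal_iff_toReal_lt hd_top).2 hn).le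
  have h_lintegral : ∫⁻ x, ENNReal.ofReal (g x) ∂μ ≤ ENNReal.ofReal C := calc
    ∫⁻ x, ENNReal.ofReal (g x) ∂μ
      ≤ ∫⁻ x, liminf (fun n => ENNReal.ofReal (r n x)) atTop ∂μ := lintegral_mono_ae h_pointwise
    _ ≤ liminf (fun n => ∫⁻ x, ENNReal.ofReal (r n x) ∂μ) atTop :=
      lintegral_liminf_le' fun n => (hr n).aemeasurable.ennreal_ofReal
    _ ≤ liminf (fun n => ENNReal.ofReal (c n)) atTop := by
      refine liminf_le_liminf (Eventually.of_forall fun n => ?_)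
      rw [← ofReal_integral_eq_lintegral_ofReal (hr n) (hr_nonneg n)]
      exact ENNReal.ofReal_le_ofReal (hc n)
    _ = ENNReal.ofReal C := (ENNReal.tendsto_ofReal h_lim).liminf_eq
  calc ∫ x, g x ∂μ ≤ (∫⁻ x, ENNReal.ofReal (g x) ∂μ).toReal := by
        rw [integral_eq_lintegral_pos_part_sub_lintegral_neg_part hg]
        exact sub_le_self _ ENNReal.toReal_nonneg
    _ ≤ C := ENNReal.toReal_le_of_le_ofReal hC h_lintegral

end Fatou

section L2

variable {Δ : Type*} [MeasurableSpace Δ] {μ : Measure Δ}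
  {E : Type*} [NormedAddCommGroup E]

/-- The pointwise norm `x ↦ ‖f x‖` of an `L²` function, as an element of `L²`. -/
noncomputable def normL2 (f : Lp E 2 μ) : Lp ℝ 2 μ :=
  lipschitzWith_one_norm.compLp norm_zero f

theorem coeFn_normL2 (f : Lp E 2 μ) : normL2 f =ᵐ[μ] fun x => ‖f x‖ :=
  lipschitzWith_one_norm.coeFn_compLp norm_zero f

theorem continuous_normL2 : Continuous (normL2 : Lp E 2 μ → Lp ℝ 2 μ) :=
  lipschitzWith_one_norm.continuous_compLp norm_zero

theorem norm_normL2 (f : Lp E 2 μ) : ‖normL2 f‖ = ‖f‖ := by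
  rw [Lp.norm_def, Lp.norm_def, eLpNorm_congr_ae (coeFn_normL2 f), eLpNorm_norm]

theorem integrable_norm_sq_L2 (f : Lp E 2 μ) : Integrable (fun x => ‖f x‖ ^ 2) μ :=
  (Lp.memLp f).integrable_norm_pow two_ne_zero

theorem integral_norm_sq_L2 (f : Lp E 2 μ) : ∫ x, ‖f x‖ ^ 2 ∂μ = ‖f‖ ^ 2 := by
  rw [← norm_normL2, ← real_inner_self_eq_norm_sq, L2.inner_def]
  refine integral_congr_ae ?_
  filter_upwards [coeFn_normL2 f] with x hx
  rw [hx, real_inner_self_eq_norm_sq, norm_norm]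

variable [IsFiniteMeasure μ]

/-- The weight `x ↦ 1 + ‖f x‖ + ‖h x‖`, as an element of `L²`. With it, the integral of the growth
bound `(1 + ‖f x‖ + ‖h x‖) * ‖g x‖` is an inner product, to which Cauchy–Schwarz and continuity
apply. -/
noncomputable def growthWeight (f h : Lp E 2 μ) : Lp ℝ 2 μ :=
  Lp.const 2 μ 1 + normL2 f + normL2 h

theorem continuous_growthWeight :
    Continuous fun p : Lp E 2 μ × Lp E 2 μ => growthWeight p.1 p.2 :=
  (continuous_const.add (continuous_normL2.comp continuous_fst)).add
    (continuous_normL2.comp continuous_snd)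

theorem inner_growthWeight_normL2_ae_eq (f h g : Lp E 2 μ) :
    (fun x => ⟪growthWeight f h x, normL2 g x⟫) =ᵐ[μ]
      fun x => (1 + ‖f x‖ + ‖h x‖) * ‖g x‖ := by
  filter_upwards [Lp.coeFn_add (Lp.const 2 μ 1 + normL2 f) (normL2 h),
    Lp.coeFn_add (Lp.const 2 μ 1) (normL2 f), Lp.coeFn_const (p := 2) (μ := μ) (1 : ℝ),
    coeFn_normL2 f, coeFn_normL2 h, coeFn_normL2 g] with x h_add₁ h_add₂ h_const hf hh hg
  rw [growthWeight, h_add₁, Pi.add_apply, h_add₂, Pi.add_apply, h_const, hf, hh, hg,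
    Function.const_apply, Real.inner_apply]

theorem integrable_growth (f h g : Lp E 2 μ) :
    Integrable (fun x => (1 + ‖f x‖ + ‖h x‖) * ‖g x‖) μ :=
  (L2.integrable_inner (growthWeight f h) (normL2 g)).congr
    (inner_growthWeight_normL2_ae_eq f h g)

theorem integral_growth (f h g : Lp E 2 μ) :
    ∫ x, (1 + ‖f x‖ + ‖h x‖) * ‖g x‖ ∂μ = ⟪growthWeight f h, normL2 g⟫ := by
  rw [L2.inner_def, integral_congr_ae (inner_growthWeight_normL2_ae_eq f h g)]

end L2

section IntegralFunctional

variable {Δ : Type*} [MeasurableSpace Δ] {μ : Measure Δ}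
  {E : Type*} [NormedAddCommGroup E] {ψ : E → ℝ} {c : ℝ}

/-- The integral functional `f ↦ ∫ ψ(f(x)) dμ(x)` on `L²(μ; E)` with integrand `ψ`. -/
noncomputable def integralFunctional (μ : Measure Δ) (ψ : E → ℝ) (f : Lp E 2 μ) : ℝ :=
  ∫ x, ψ (f x) ∂μ

namespace LipschitzWithLinearGrowth

theorem aestronglyMeasurable_comp (hψ : LipschitzWithLinearGrowth c ψ) (f : Lp E 2 μ) :
    AEStronglyMeasurable (fun x => ψ (f x)) μ :=
  hψ.continuous.comp_aestronglyMeasurable (Lp.aestronglyMeasurable f)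

theorem abs_comp_sub_comp_ae_le (hψ : LipschitzWithLinearGrowth c ψ) (f h : Lp E 2 μ) :
    ∀ᵐ x ∂μ, |ψ (f x) - ψ (h x)| ≤ c * ((1 + ‖f x‖ + ‖h x‖) * ‖(f - h) x‖) := by
  filter_upwards [Lp.coeFn_sub f h] with x hx
  rw [hx, Pi.sub_apply, ← mul_assoc]
  exact hψ (f x) (h x)

section FiniteMeasure

variable [IsFiniteMeasure μ]

theorem integrable_comp (hψ : LipschitzWithLinearGrowth c ψ) (f : Lp E 2 μ) :
    Integrable (fun x => ψ (f x)) μ := by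
  have h_sub : Integrable (fun x => ψ (f x) - ψ 0) μ := by
    refine ((integrable_growth f 0 f).const_mul c).mono'
      ((hψ.aestronglyMeasurable_comp f).sub aestronglyMeasurable_const) ?_
    filter_upwards [Lp.coeFn_zero E 2 μ] with x hx
    simpa only [hx, Pi.zero_apply, sub_zero, mul_assoc, Real.norm_eq_abs] using hψ (f x) 0
  exact (h_sub.add (integrable_const (ψ 0))).congr
    (Eventually.of_forall fun x => sub_add_cancel _ _)

theorem abs_integralFunctional_sub_le (hψ : LipschitzWithLinearGrowth c ψ) (f h : Lp E 2 μ) :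
    |integralFunctional μ ψ f - integralFunctional μ ψ h| ≤
      ‖c • growthWeight f h‖ * ‖f - h‖ := by
  rw [integralFunctional, integralFunctional,
    ← integral_sub (hψ.integrable_comp f) (hψ.integrable_comp h), ← Real.norm_eq_abs]
  calc ‖∫ x, (ψ (f x) - ψ (h x)) ∂μ‖
      ≤ ∫ x, c * ((1 + ‖f x‖ + ‖h x‖) * ‖(f - h) x‖) ∂μ :=
        norm_integral_le_of_norm_le ((integrable_growth f h (f - h)).const_mul c)
          (hψ.abs_comp_sub_comp_ae_le f h)
    _ = ⟪c • growthWeight f h, normL2 (f - h)⟫ := by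
        rw [integral_const_mul, integral_growth, real_inner_smul_left]
    _ ≤ ‖c • growthWeight f h‖ * ‖f - h‖ := by
        rw [← norm_normL2 (f - h)]
        exact real_inner_le_norm _ _

theorem lipschitzNear_integralFunctional (hψ : LipschitzWithLinearGrowth c ψ) (f : Lp E 2 μ) :
    LipschitzNear (integralFunctional μ ψ) f :=
  lipschitzNear_of_eventually_abs_sub_le (k := fun p => ‖c • growthWeight p.1 p.2‖)
    (continuous_growthWeight.const_smul c).norm.continuousAt
    (Eventually.of_forall fun p => hψ.abs_integralFunctional_sub_le p.1 p.2)

end FiniteMeasure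

variable [NormedSpace ℝ E]

theorem aestronglyMeasurable_clarkeDeriv (hψ : LipschitzWithLinearGrowth c ψ) (f g : Lp E 2 μ) :
    AEStronglyMeasurable (fun x => clarkeDeriv ψ (f x) (g x)) μ := by
  borelize (E × E)
  have h_usc : UpperSemicontinuous fun p : E × E => clarkeDeriv ψ p.1 p.2 :=
    fun p => (hψ.lipschitzNear p.1).upperSemicontinuousAt_clarkeDeriv p.2
  exact (h_usc.measurable.comp
    ((Lp.stronglyMeasurable f).prodMk (Lp.stronglyMeasurable g)).measurable).aestronglyMeasurable

theorem quotient_ae_le (hψ : LipschitzWithLinearGrowth c ψ) (f g : Lp E 2 μ) {t : ℝ}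
    (ht : 0 < t) :
    ∀ᵐ x ∂μ, (ψ ((f + t • g) x) - ψ (f x)) / t ≤
      c * ((1 + ‖(f + t • g) x‖ + ‖f x‖) * ‖g x‖) := by
  filter_upwards [hψ.abs_comp_sub_comp_ae_le (f + t • g) f, Lp.coeFn_smul t g] with x hx h_smul
  rw [add_sub_cancel_left, h_smul, Pi.smul_apply, norm_smul, Real.norm_of_nonneg ht.le] at hx
  rw [div_le_iff₀ ht]
  linarith [le_abs_self (ψ ((f + t • g) x) - ψ (f x))]

theorem ae_eventually_lt_bound_sub_quotient (hψ : LipschitzWithLinearGrowth c ψ)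
    {f : Lp E 2 μ} (g : Lp E 2 μ) {h : ℕ → Lp E 2 μ} {t : ℕ → ℝ}
    (hh : ∀ᵐ x ∂μ, Tendsto (fun n => h n x) atTop (𝓝 (f x))) (ht : Tendsto t atTop (𝓝[>] 0)) :
    ∀ᵐ x ∂μ, ∀ d < c * ((1 + ‖f x‖ + ‖f x‖) * ‖g x‖) - clarkeDeriv ψ (f x) (g x),
      ∀ᶠ n in atTop, d < c * ((1 + ‖(h n + t n • g) x‖ + ‖h n x‖) * ‖g x‖)
        - (ψ ((h n + t n • g) x) - ψ (h n x)) / t n := by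
  have h_coe : ∀ᵐ x ∂μ, ∀ n, (h n + t n • g) x = h n x + t n • g x := by
    refine ae_all_iff.2 fun n => ?_
    filter_upwards [Lp.coeFn_add (h n) (t n • g), Lp.coeFn_smul (t n) g] with x h_add h_smul
    rw [h_add, Pi.add_apply, h_smul, Pi.smul_apply]
  filter_upwards [hh, h_coe] with x hx hx_coe d hd
  simp only [hx_coe, ← mul_assoc] at hd ⊢
  exact (hx.prodMk ht).eventually (hψ.eventually_lt_bound_sub_quotient hd)

variable [IsFiniteMeasure μ]

theorem integrable_clarkeDeriv (hψ : LipschitzWithLinearGrowth c ψ) (f g : Lp E 2 μ) :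
    Integrable (fun x => clarkeDeriv ψ (f x) (g x)) μ := by
  refine ((integrable_growth f f g).const_mul c).mono' (hψ.aestronglyMeasurable_clarkeDeriv f g)
    (Eventually.of_forall fun x => ?_)
  rw [← mul_assoc]
  exact hψ.abs_clarkeDeriv_le (f x) (g x)

theorem integrable_quotient (hψ : LipschitzWithLinearGrowth c ψ) (f g : Lp E 2 μ) (t : ℝ) :
    Integrable (fun x => (ψ ((f + t • g) x) - ψ (f x)) / t) μ :=
  ((hψ.integrable_comp (f + t • g)).sub (hψ.integrable_comp f)).div_const t

theorem integral_quotient (hψ : LipschitzWithLinearGrowth c ψ) (f g : Lp E 2 μ) (t : ℝ) :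
    ∫ x, (ψ ((f + t • g) x) - ψ (f x)) / t ∂μ =
      (integralFunctional μ ψ (f + t • g) - integralFunctional μ ψ f) / t := by
  rw [integral_div, integral_sub (hψ.integrable_comp _) (hψ.integrable_comp f),
    integralFunctional, integralFunctional]

theorem le_integral_clarkeDeriv_of_le_quotient (hψ : LipschitzWithLinearGrowth c ψ)
    {f g : Lp E 2 μ} {h : ℕ → Lp E 2 μ} {t : ℕ → ℝ} {C : ℝ}
    (hh : Tendsto h atTop (𝓝 f)) (hh_ae : ∀ᵐ x ∂μ, Tendsto (fun n => h n x) atTop (𝓝 (f x)))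
    (ht : Tendsto t atTop (𝓝[>] 0)) (ht_pos : ∀ n, 0 < t n)
    (hC : ∀ n, C ≤
      (integralFunctional μ ψ (h n + t n • g) - integralFunctional μ ψ (h n)) / t n) :
    C ≤ ∫ x, clarkeDeriv ψ (f x) (g x) ∂μ := by
  have h_bound_int (f₁ f₂ : Lp E 2 μ) := (integrable_growth f₁ f₂ g).const_mul c
  have h_bound (f₁ f₂ : Lp E 2 μ) : ∫ x, c * ((1 + ‖f₁ x‖ + ‖f₂ x‖) * ‖g x‖) ∂μ =
      c * ⟪growthWeight f₁ f₂, normL2 g⟫ := by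
    rw [integral_const_mul, integral_growth]
  have h_le (n : ℕ) : ∫ x, (c * ((1 + ‖(h n + t n • g) x‖ + ‖h n x‖) * ‖g x‖)
      - (ψ ((h n + t n • g) x) - ψ (h n x)) / t n) ∂μ ≤
        c * ⟪growthWeight (h n + t n • g) (h n), normL2 g⟫ - C := by
    rw [integral_sub (h_bound_int _ _) (hψ.integrable_quotient (h n) g (t n)), h_bound,
      hψ.integral_quotient]
    exact sub_le_sub_left (hC n) _
  have h_lim : Tendsto (fun n => c * ⟪growthWeight (h n + t n • g) (h n), normL2 g⟫ - C) atTop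
      (𝓝 (c * ⟪growthWeight f f, normL2 g⟫ - C)) := by
    have h_pair : Tendsto (fun n => (h n + t n • g, h n)) atTop (𝓝 (f, f)) :=
      ((tendsto_fst_add_snd_smul f g).comp (hh.prodMk ht)).prodMk_nhds hh
    exact ((((continuous_growthWeight.tendsto (f, f)).comp h_pair).inner
      tendsto_const_nhds).const_mul c).sub_const C
  have h_fatou := integral_le_of_le_liminf
    (fun n => (h_bound_int _ _).sub (hψ.integrable_quotient (h n) g (t n)))
    (fun n => (hψ.quotient_ae_le (h n) g (ht_pos n)).mono fun x hx => sub_nonneg.2 hx)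
    ((h_bound_int f f).sub (hψ.integrable_clarkeDeriv f g))
    (hψ.ae_eventually_lt_bound_sub_quotient g hh_ae ht) h_le h_lim
  rw [integral_sub' (h_bound_int f f) (hψ.integrable_clarkeDeriv f g), h_bound] at h_fatou
  linarith

theorem clarkeDeriv_integralFunctional_le (hψ : LipschitzWithLinearGrowth c ψ)
    (f g : Lp E 2 μ) :
    clarkeDeriv (integralFunctional μ ψ) f g ≤ ∫ x, clarkeDeriv ψ (f x) (g x) ∂μ := by
  refine le_of_forall_lt_imp_le_of_dense fun C hC => ?_
  have h_pos : ∀ᶠ p : Lp E 2 μ × ℝ in 𝓝 f ×ˢ 𝓝[>] 0, 0 < p.2 :=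
    tendsto_snd.eventually self_mem_nhdsWithin
  obtain ⟨p, hp, hp_quot⟩ := exists_seq_forall_of_frequently
    (((hψ.lipschitzNear_integralFunctional f).frequently_lt_quotient hC).and_eventually h_pos)
  have h_fst : Tendsto (fun n => (p n).1) atTop (𝓝 f) := tendsto_fst.comp hp
  have h_snd : Tendsto (fun n => (p n).2) atTop (𝓝[>] 0) := tendsto_snd.comp hp
  obtain ⟨s, hs, hs_ae⟩ := (tendstoInMeasure_of_tendsto_Lp h_fst).exists_seq_tendsto_ae
  exact hψ.le_integral_clarkeDeriv_of_le_quotient (h_fst.comp hs.tendsto_atTop) hs_ae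
    (h_snd.comp hs.tendsto_atTop) (fun n => (hp_quot (s n)).2) fun n => (hp_quot (s n)).1.le

theorem clarkeDeriv_integralFunctional_add_le (hψ : LipschitzWithLinearGrowth c ψ) {α : ℝ}
    (hmon : ∀ z₁ z₂, clarkeDeriv ψ z₁ (z₂ - z₁) + clarkeDeriv ψ z₂ (z₁ - z₂) ≤
      α * ‖z₁ - z₂‖ ^ 2) (f h : Lp E 2 μ) :
    clarkeDeriv (integralFunctional μ ψ) f (h - f) +
      clarkeDeriv (integralFunctional μ ψ) h (f - h) ≤ α * ‖f - h‖ ^ 2 := by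
  have h_pointwise : ∀ᵐ x ∂μ, clarkeDeriv ψ (f x) ((h - f) x) + clarkeDeriv ψ (h x) ((f - h) x) ≤
      α * ‖(f - h) x‖ ^ 2 := by
    filter_upwards [Lp.coeFn_sub f h, Lp.coeFn_sub h f] with x hfh hhf
    rw [hfh, hhf]
    exact hmon (f x) (h x)
  have h_int₁ := hψ.integrable_clarkeDeriv f (h - f)
  have h_int₂ := hψ.integrable_clarkeDeriv h (f - h)
  calc clarkeDeriv (integralFunctional μ ψ) f (h - f) +
        clarkeDeriv (integralFunctional μ ψ) h (f - h)
      ≤ ∫ x, clarkeDeriv ψ (f x) ((h - f) x) ∂μ + ∫ x, clarkeDeriv ψ (h x) ((f - h) x) ∂μ :=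
        add_le_add (hψ.clarkeDeriv_integralFunctional_le f (h - f))
          (hψ.clarkeDeriv_integralFunctional_le h (f - h))
    _ = ∫ x, (clarkeDeriv ψ (f x) ((h - f) x) + clarkeDeriv ψ (h x) ((f - h) x)) ∂μ :=
        (integral_add h_int₁ h_int₂).symm
    _ ≤ ∫ x, α * ‖(f - h) x‖ ^ 2 ∂μ :=
        integral_mono_ae (h_int₁.add h_int₂) ((integrable_norm_sq_L2 (f - h)).const_mul α)
          h_pointwise
    _ = α * ‖f - h‖ ^ 2 := by rw [integral_const_mul, integral_norm_sq_L2]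

end LipschitzWithLinearGrowth

end IntegralFunctional

theorem stmt11_general {V : Type*} [NormedAddCommGroup V] [NormedSpace ℝ V]
    {Δ : Type*} [MeasurableSpace Δ] {μ : Measure Δ} [IsFiniteMeasure μ]
    {E : Type*} [NormedAddCommGroup E] [NormedSpace ℝ E] (γ : V →L[ℝ] Lp E 2 μ)
    {cΔ : ℝ} (hγ : ∀ v, ‖γ v‖ ≤ cΔ * ‖v‖) {ψ : E → ℝ} (hψ : LocallyLipschitz ψ)
    {c : ℝ} (hgrowth : ∀ z, ∀ ξ ∈ clarkeSubdifferential ψ z, ‖ξ‖ ≤ c * (1 + ‖z‖))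
    {α : ℝ} (hα : 0 ≤ α)
    (hmon : ∀ z₁ z₂, clarkeDeriv ψ z₁ (z₂ - z₁) + clarkeDeriv ψ z₂ (z₁ - z₂) ≤
      α * ‖z₁ - z₂‖ ^ 2)
    {Ψ : V → ℝ} (hΨ : ∀ v, Ψ v = ∫ x, ψ (γ v x) ∂μ) :
    (∀ v, Integrable (fun x => ψ (γ v x)) μ) ∧ LocallyLipschitz Ψ ∧
      ∀ v₁ v₂, clarkeDeriv Ψ v₁ (v₂ - v₁) + clarkeDeriv Ψ v₂ (v₁ - v₂) ≤
        α * cΔ ^ 2 * ‖v₁ - v₂‖ ^ 2 := by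
  have hψ_growth := lipschitzWithLinearGrowth_of_subgradient_norm_le hψ hgrowth
  have h_near (v : V) := hψ_growth.lipschitzNear_integralFunctional (γ v)
  obtain rfl : Ψ = fun v => integralFunctional μ ψ (γ v) := funext hΨ
  refine ⟨fun v => hψ_growth.integrable_comp (γ v),
    fun v => (h_near v).comp_continuousLinearMap, fun v₁ v₂ => ?_⟩
  calc _ ≤ clarkeDeriv (integralFunctional μ ψ) (γ v₁) (γ (v₂ - v₁)) +
        clarkeDeriv (integralFunctional μ ψ) (γ v₂) (γ (v₁ - v₂)) :=
        add_le_add ((h_near v₁).clarkeDeriv_comp_continuousLinearMap_le _)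
          ((h_near v₂).clarkeDeriv_comp_continuousLinearMap_le _)
    _ ≤ α * ‖γ (v₁ - v₂)‖ ^ 2 := by
        simp only [map_sub]
        exact hψ_growth.clarkeDeriv_integralFunctional_add_le hmon (γ v₁) (γ v₂)
    _ ≤ α * (cΔ * ‖v₁ - v₂‖) ^ 2 := by gcongr; exact hγ _
    _ = α * cΔ ^ 2 * ‖v₁ - v₂‖ ^ 2 := by ring

theorem stmt11 {V : Type*} [NormedAddCommGroup V] [InnerProductSpace ℝ V] [CompleteSpace V]
    {Δ : Type*} [MeasurableSpace Δ] (μ : Measure Δ) [IsFiniteMeasure μ]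
    (m : ℕ) (hm : 1 ≤ m)
    (γψ : V →L[ℝ] (Lp (EuclideanSpace ℝ (Fin m)) 2 μ))
    (cΔ : ℝ) (hcΔ : 0 < cΔ) (hγ : ∀ v : V, ‖γψ v‖ ≤ cΔ * ‖v‖)
    (ψ : EuclideanSpace ℝ (Fin m) → ℝ)
    (hψlip : ∀ z : EuclideanSpace ℝ (Fin m),
      ∃ (L : NNReal) (s : Set (EuclideanSpace ℝ (Fin m))), s ∈ 𝓝 z ∧ LipschitzOnWith L ψ s)
    (cψ : ℝ) (hcψ : 0 ≤ cψ)
    (hψgrowth : ∀ z ξ : EuclideanSpace ℝ (Fin m),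
      (∀ w, ⟪ξ, w⟫ ≤ clarkeDeriv ψ z w) → ‖ξ‖ ≤ cψ * (1 + ‖z‖))
    (αψ : ℝ) (hαψ : 0 ≤ αψ)
    (hψmon : ∀ z₁ z₂ : EuclideanSpace ℝ (Fin m),
      clarkeDeriv ψ z₁ (z₂ - z₁) + clarkeDeriv ψ z₂ (z₁ - z₂) ≤ αψ * ‖z₁ - z₂‖ ^ 2)
    (Ψ : V → ℝ) (hΨdef : ∀ v : V, Ψ v = ∫ x, ψ ((γψ v) x) ∂μ) :
    (∀ v : V, Integrable (fun x => ψ ((γψ v) x)) μ) ∧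
    (∀ u : V, ∃ (L : NNReal) (s : Set V), s ∈ 𝓝 u ∧ LipschitzOnWith L Ψ s) ∧
    (∀ v₁ v₂ : V,
      clarkeDeriv Ψ v₁ (v₂ - v₁) + clarkeDeriv Ψ v₂ (v₁ - v₂) ≤ αψ * cΔ ^ 2 * ‖v₁ - v₂‖ ^ 2) :=
  stmt11_general γψ hγ hψlip (fun z ξ hξ => by
    simpa only [LinearIsometryEquiv.norm_map] using hψgrowth z
      ((InnerProductSpace.toDual ℝ _).symm ξ) fun w => by
        simpa only [InnerProductSpace.toDual_symm_apply] using hξ w) hαψ hψmon hΨdef
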